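/- arXiv:1306.5358 — 2 statements merged into one kernel-verified Lean document; each statement's English description precedes it below -/
import Mathlib

section
/- Let −1 ≤ p < 0 and let K be a fixed n×n complex matrix. The map Z ↦ tr(Z^p K* Z^{1−p} K) is convex on positive definite n×n matrices (a form of Ando's convexity theorem). -/
open Matrix ComplexOrder

/-- Functional calculus for Hermitian matrices: apply `f` to the eigenvalues. -/
noncomputable def mfun {m : Type*} [Fintype m] [DecidableEq m] (f : ℝ → ℝ)
    (A : Matrix m m ℂ) : Matrix m m ℂ :=
  if hA : A.IsHermitian then
    (hA.eigenvectorUnitary : Matrix m m ℂ) *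
      Matrix.diagonal (fun i => (f (hA.eigenvalues i) : ℂ)) *
      (star (hA.eigenvectorUnitary : Matrix m m ℂ))
  else 0

/-- Real matrix power via the functional calculus. -/
noncomputable def mpow {m : Type*} [Fintype m] [DecidableEq m]
    (A : Matrix m m ℂ) (p : ℝ) : Matrix m m ℂ :=
  mfun (fun x => x ^ p) A

/-!
For Hermitian `A` and `B`, left multiplication by `A` and right multiplication by `B` commute, so
`f(L_A, R_B)` makes sense for every `f : ℝ → ℝ → ℝ`, and the trace in question is
`⟪K, f(L_A, R_B) K⟫` with `f a b = a ^ (1 - p) * b ^ p` and `A = B = Z`. It is in fact jointly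
convex in `(A, B)`. Completing the square gives
`a ^ 2 / (μ * a + ν * b) * ‖k‖ ^ 2 = max_w (2 * a * ⟪w, k⟫ - (μ * a + ν * b) * ‖w‖ ^ 2)`,
and the right-hand side is a maximum of functions that are linear in `(a, b)`; applied to `L_A` and
`R_B`, it exhibits the form of `a ^ 2 / (μ * a + ν * b)` as a maximum of linear functionals of
`(A, B)`. The exponent `p = -1` is `a ^ 2 / b`, and for `-1 < p < 0` the function
`a ^ (1 - p) * b ^ p` is an integral over `t > 0` of positive multiples of `a ^ 2 / (a + t * b)`.
-/

open MeasureTheory Real Set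
open scoped InnerProductSpace

theorem convexOn_of_exists_linearMap_le {E : Type*} [AddCommGroup E] [Module ℝ E] {s : Set E}
    {f : E → ℝ} (hs : Convex ℝ s)
    (h : ∀ x ∈ s, ∃ g : E →ₗ[ℝ] ℝ, g x = f x ∧ ∀ y ∈ s, g y ≤ f y) : ConvexOn ℝ s f := by
  refine ⟨hs, fun x hx y hy a b ha hb hab => ?_⟩
  obtain ⟨g, hg_eq, hg_le⟩ := h _ (hs hx hy ha hb hab)
  rw [← hg_eq, map_add, map_smul, map_smul]
  gcongr
  exacts [hg_le x hx, hg_le y hy]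

section CompletingSquare

variable {E : Type*} [NormedAddCommGroup E] [InnerProductSpace ℝ E] {a c : ℝ}

theorem two_mul_inner_sub_le_sq_div_mul_inner (hc : 0 < c) (w k : E) :
    2 * a * ⟪w, k⟫_ℝ - c * ⟪w, w⟫_ℝ ≤ a ^ 2 / c * ⟪k, k⟫_ℝ := by
  have h_sq : ⟪c • w - a • k, c • w - a • k⟫_ℝ =
      c * (a ^ 2 / c * ⟪k, k⟫_ℝ - (2 * a * ⟪w, k⟫_ℝ - c * ⟪w, w⟫_ℝ)) := by
    simp only [inner_sub_left, inner_sub_right, real_inner_smul_left, real_inner_smul_right,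
      real_inner_comm w k]
    field
  exact sub_nonneg.1 (nonneg_of_mul_nonneg_right (h_sq ▸ real_inner_self_nonneg) hc)

theorem two_mul_inner_smul_sub_eq_sq_div_mul_inner (hc : c ≠ 0) (k : E) :
    2 * a * ⟪(a / c) • k, k⟫_ℝ - c * ⟪(a / c) • k, (a / c) • k⟫_ℝ = a ^ 2 / c * ⟪k, k⟫_ℝ := by
  simp only [real_inner_smul_left, real_inner_smul_right]
  field

end CompletingSquare

section Perspective

variable {s t a b : ℝ}

theorem mul_div_rpow (hs : 0 ≤ s) (ha : 0 ≤ a) (hb : 0 ≤ b) :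
    a * (a / b) ^ s = a ^ (1 + s) * b ^ (-s) := by
  rw [div_rpow ha hb, rpow_one_add' ha (by positivity), rpow_neg hb, mul_div_assoc', div_eq_mul_inv]

/- The factor `t ^ (s - 1)` of the integrand is moved into the denominator to reach the shape
`a ^ 2 / (μ * a + ν * b)`. -/
theorem mul_rpowIntegrand₀₁_div (hs : s ∈ Ioo 0 1) (ht : 0 < t) (ha : 0 ≤ a) (hb : 0 < b) :
    a * rpowIntegrand₀₁ s t (a / b) = a ^ 2 / (t ^ (1 - s) * a + t ^ (2 - s) * b) := by
  have h_sub_one : t ^ (s - 1) = (t ^ (1 - s))⁻¹ := by rw [← rpow_neg ht.le, neg_sub]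
  have h_two_sub : t ^ (2 - s) = t ^ (1 - s) * t := by
    rw [← rpow_add_one ht.ne']
    ring_nf
  have : t + a / b ≠ 0 := by positivity
  have : a + t * b ≠ 0 := by positivity
  rw [rpowIntegrand₀₁_eq_pow_div hs ht.le (by positivity), h_sub_one, h_two_sub, mul_assoc,
    ← mul_add]
  field

end Perspective

section PosDef

variable {m 𝕜 : Type*} [RCLike 𝕜]

theorem convex_setOf_posSemidef : Convex ℝ {A : Matrix m m 𝕜 | A.PosSemidef} :=
  fun _ hA _ hB _ _ ha hb _ => (hA.smul ha).add (hB.smul hb)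

theorem convex_setOf_posDef : Convex ℝ {A : Matrix m m 𝕜 | A.PosDef} :=
  convex_iff_forall_pos.2 fun _ hA _ hB _ _ ha hb _ => (hA.smul ha).add (hB.smul hb)

end PosDef

variable {m n : Type*} [Fintype m] [Fintype n]

/-- The real-linear functional `A ↦ Re tr(Wᴴ A K)`, the real part of `⟪W, A K⟫` for the trace inner
product. -/
noncomputable def reTraceForm (W K : Matrix m n ℂ) : Matrix m m ℂ →ₗ[ℝ] ℝ where
  toFun A := (Wᴴ * A * K).trace.re
  map_add' A B := by rw [Matrix.mul_add, Matrix.add_mul, trace_add, Complex.add_re]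
  map_smul' r A := by
    rw [Matrix.mul_smul, Matrix.smul_mul, trace_smul, Complex.smul_re, RingHom.id_apply]

theorem reTraceForm_apply (W K : Matrix m n ℂ) (A : Matrix m m ℂ) :
    reTraceForm W K A = (Wᴴ * A * K).trace.re :=
  rfl

/-- The linear functional of `(A, B)` that completing the square produces: `K` is fixed and `W` is
the variable over which it is maximized. -/
noncomputable def squareMinorant (μ ν : ℝ) (K W : Matrix m n ℂ) :
    Matrix m m ℂ × Matrix n n ℂ →ₗ[ℝ] ℝ :=
  (2 • reTraceForm W K - μ • reTraceForm W W) ∘ₗ .fst ℝ _ _ -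
    (ν • reTraceForm Wᴴ Wᴴ) ∘ₗ .snd ℝ _ _

theorem squareMinorant_apply (μ ν : ℝ) (K W : Matrix m n ℂ) (X : Matrix m m ℂ × Matrix n n ℂ) :
    squareMinorant μ ν K W X =
      2 * reTraceForm W K X.1 - μ * reTraceForm W W X.1 - ν * reTraceForm Wᴴ Wᴴ X.2 := by
  simp [squareMinorant]

variable [DecidableEq m] [DecidableEq n]

section Mfun

variable {A : Matrix m m ℂ}

theorem mfun_of_isHermitian (hA : A.IsHermitian) (f : ℝ → ℝ) :
    mfun f A = (hA.eigenvectorUnitary : Matrix m m ℂ) *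
      diagonal (fun i => (f (hA.eigenvalues i) : ℂ)) *
        (hA.eigenvectorUnitary : Matrix m m ℂ)ᴴ :=
  dif_pos hA

theorem mfun_eq_cfc (hA : A.IsHermitian) (f : ℝ → ℝ) : mfun f A = cfc f A := by
  rw [hA.cfc_eq]
  exact dif_pos hA

theorem mfun_id (hA : A.IsHermitian) : mfun (fun x => x) A = A := by
  rw [mfun_eq_cfc hA, cfc_id' ℝ A hA.isSelfAdjoint]

theorem mfun_const_one (hA : A.IsHermitian) : mfun (fun _ => 1) A = 1 := by
  rw [mfun_eq_cfc hA, cfc_const_one ℝ A hA.isSelfAdjoint]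

end Mfun

section EigenCoord

variable {A : Matrix m m ℂ} {B : Matrix n n ℂ}

/-- The coordinates of `K` in the joint eigenbasis of left multiplication by `A` and right
multiplication by `B`, indexed by pairs of an eigenvector of `A` and an eigenvector of `B`. -/
noncomputable def eigenCoord (hA : A.IsHermitian) (hB : B.IsHermitian) (K : Matrix m n ℂ) :
    Matrix m n ℂ :=
  (hA.eigenvectorUnitary : Matrix m m ℂ)ᴴ * K * (hB.eigenvectorUnitary : Matrix n n ℂ)

theorem eigenCoord_surjective (hA : A.IsHermitian) (hB : B.IsHermitian) :
    Function.Surjective (eigenCoord hA hB) := by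
  intro L
  have hU : (hA.eigenvectorUnitary : Matrix m m ℂ)ᴴ * hA.eigenvectorUnitary = 1 :=
    Unitary.coe_star_mul_self _
  have hV : (hB.eigenvectorUnitary : Matrix n n ℂ)ᴴ * hB.eigenvectorUnitary = 1 :=
    Unitary.coe_star_mul_self _
  refine ⟨(hA.eigenvectorUnitary : Matrix m m ℂ) * L * (hB.eigenvectorUnitary : Matrix n n ℂ)ᴴ, ?_⟩
  simp only [eigenCoord, Matrix.mul_assoc, hV, Matrix.mul_one]
  rw [← Matrix.mul_assoc, hU, Matrix.one_mul]

theorem re_trace_diagonal_mul_conjTranspose_mul_diagonal_mul (d : m → ℝ) (e : n → ℝ)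
    (W K : Matrix m n ℂ) :
    (diagonal (fun j => (e j : ℂ)) * Wᴴ * diagonal (fun i => (d i : ℂ)) * K).trace.re =
      ∑ x : m × n, d x.1 * e x.2 * ⟪W x.1 x.2, K x.1 x.2⟫_ℝ := by
  rw [Fintype.sum_prod_type_right, trace, Complex.re_sum]
  refine Finset.sum_congr rfl fun j _ => ?_
  rw [diag_apply, mul_apply, Complex.re_sum]
  refine Finset.sum_congr rfl fun i _ => ?_
  rw [mul_diagonal, diagonal_mul, conjTranspose_apply, Complex.inner, ← Complex.re_ofReal_mul]
  congr 1
  push_cast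
  simp only [starRingEnd_apply]
  ring

end EigenCoord

/-- `⟪W, f(L_A, R_B) K⟫`, where `L_A` is left multiplication by `A`, `R_B` is right multiplication
by `B` and the inner product is the real part of the trace inner product. Like `mfun`, it is `0` if
`A` or `B` is not Hermitian. -/
noncomputable def spectralForm (f : ℝ → ℝ → ℝ) (A : Matrix m m ℂ) (B : Matrix n n ℂ)
    (W K : Matrix m n ℂ) : ℝ :=
  if h : A.IsHermitian ∧ B.IsHermitian then
    ∑ x : m × n, f (h.1.eigenvalues x.1) (h.2.eigenvalues x.2) *
      ⟪eigenCoord h.1 h.2 W x.1 x.2, eigenCoord h.1 h.2 K x.1 x.2⟫_ℝ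
  else 0

section SpectralForm

variable {f g : ℝ → ℝ → ℝ} {A : Matrix m m ℂ} {B : Matrix n n ℂ}

theorem spectralForm_of_isHermitian (hA : A.IsHermitian) (hB : B.IsHermitian) (f : ℝ → ℝ → ℝ)
    (W K : Matrix m n ℂ) :
    spectralForm f A B W K = ∑ x : m × n, f (hA.eigenvalues x.1) (hB.eigenvalues x.2) *
      ⟪eigenCoord hA hB W x.1 x.2, eigenCoord hA hB K x.1 x.2⟫_ℝ :=
  dif_pos ⟨hA, hB⟩

theorem re_trace_mfun_mul_conjTranspose_mul_mfun_mul (hA : A.IsHermitian) (hB : B.IsHermitian)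
    (f g : ℝ → ℝ) (W K : Matrix m n ℂ) :
    (mfun g B * Wᴴ * mfun f A * K).trace.re = spectralForm (fun a b => f a * g b) A B W K := by
  rw [spectralForm_of_isHermitian hA hB,
    ← re_trace_diagonal_mul_conjTranspose_mul_diagonal_mul (fun i => f (hA.eigenvalues i))
      (fun j => g (hB.eigenvalues j)),
    mfun_of_isHermitian hA, mfun_of_isHermitian hB]
  simp only [eigenCoord, conjTranspose_mul, conjTranspose_conjTranspose, Matrix.mul_assoc]
  rw [trace_mul_comm]
  simp only [Matrix.mul_assoc]

theorem reTraceForm_eq_spectralForm (hA : A.IsHermitian) (hB : B.IsHermitian)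
    (W K : Matrix m n ℂ) : reTraceForm W K A = spectralForm (fun a _ => a) A B W K := by
  simpa only [reTraceForm_apply, mfun_id hA, mfun_const_one hB, Matrix.one_mul, mul_one] using
    re_trace_mfun_mul_conjTranspose_mul_mfun_mul hA hB (fun a => a) (fun _ => 1) W K

theorem reTraceForm_conjTranspose_eq_spectralForm (hA : A.IsHermitian) (hB : B.IsHermitian)
    (W K : Matrix m n ℂ) : reTraceForm Kᴴ Wᴴ B = spectralForm (fun _ b => b) A B W K := by
  have h_cyclic : (Kᴴᴴ * B * Wᴴ).trace = (B * Wᴴ * K).trace := by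
    rw [conjTranspose_conjTranspose, Matrix.mul_assoc, trace_mul_comm]
  rw [reTraceForm_apply, h_cyclic]
  simpa only [mfun_const_one hA, mfun_id hB, Matrix.mul_one, one_mul] using
    re_trace_mfun_mul_conjTranspose_mul_mfun_mul hA hB (fun _ => 1) (fun b => b) W K

theorem spectralForm_congr (hA : A.PosSemidef) (hB : B.PosDef)
    (h : ∀ a b, 0 ≤ a → 0 < b → f a b = g a b) (W K : Matrix m n ℂ) :
    spectralForm f A B W K = spectralForm g A B W K := by
  simp only [spectralForm_of_isHermitian hA.isHermitian hB.isHermitian,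
    h _ _ (hA.eigenvalues_nonneg _) (hB.eigenvalues_pos _)]

section Integral

variable {α : Type*} [MeasurableSpace α] {ρ : Measure α} {F : α → ℝ → ℝ → ℝ}

theorem integrable_spectralForm (hF : ∀ a b, 0 ≤ a → 0 < b → Integrable (F · a b) ρ)
    (hA : A.PosSemidef) (hB : B.PosDef) (W K : Matrix m n ℂ) :
    Integrable (fun t => spectralForm (F t) A B W K) ρ := by
  simp only [spectralForm_of_isHermitian hA.isHermitian hB.isHermitian]
  exact integrable_finsetSum _ fun x _ =>
    (hF _ _ (hA.eigenvalues_nonneg _) (hB.eigenvalues_pos _)).mul_const _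

theorem integral_spectralForm (hF : ∀ a b, 0 ≤ a → 0 < b → Integrable (F · a b) ρ)
    (hA : A.PosSemidef) (hB : B.PosDef) (W K : Matrix m n ℂ) :
    ∫ t, spectralForm (F t) A B W K ∂ρ = spectralForm (fun a b => ∫ t, F t a b ∂ρ) A B W K := by
  simp only [spectralForm_of_isHermitian hA.isHermitian hB.isHermitian]
  rw [integral_finsetSum _ fun x _ =>
    (hF _ _ (hA.eigenvalues_nonneg _) (hB.eigenvalues_pos _)).mul_const _]
  simp only [integral_mul_const]

end Integral

end SpectralForm

section SquareMinorant

variable {μ ν : ℝ} {X : Matrix m m ℂ × Matrix n n ℂ}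

theorem squareMinorant_eq_sum (hA : X.1.IsHermitian) (hB : X.2.IsHermitian) (μ ν : ℝ)
    (K W : Matrix m n ℂ) :
    squareMinorant μ ν K W X = ∑ x : m × n,
      (2 * hA.eigenvalues x.1 * ⟪eigenCoord hA hB W x.1 x.2, eigenCoord hA hB K x.1 x.2⟫_ℝ -
        (μ * hA.eigenvalues x.1 + ν * hB.eigenvalues x.2) *
          ⟪eigenCoord hA hB W x.1 x.2, eigenCoord hA hB W x.1 x.2⟫_ℝ) := by
  rw [squareMinorant_apply, reTraceForm_eq_spectralForm hA hB, reTraceForm_eq_spectralForm hA hB,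
    reTraceForm_conjTranspose_eq_spectralForm hA hB]
  simp only [spectralForm_of_isHermitian hA hB, Finset.mul_sum, ← Finset.sum_sub_distrib]
  refine Finset.sum_congr rfl fun x _ => ?_
  ring

theorem squareMinorant_le_spectralForm (hμ : 0 ≤ μ) (hν : 0 < ν) (hA : X.1.PosSemidef)
    (hB : X.2.PosDef) (K W : Matrix m n ℂ) :
    squareMinorant μ ν K W X ≤
      spectralForm (fun a b => a ^ 2 / (μ * a + ν * b)) X.1 X.2 K K := by
  rw [squareMinorant_eq_sum hA.isHermitian hB.isHermitian,
    spectralForm_of_isHermitian hA.isHermitian hB.isHermitian]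
  refine Finset.sum_le_sum fun x _ => two_mul_inner_sub_le_sq_div_mul_inner ?_ _ _
  exact add_pos_of_nonneg_of_pos (mul_nonneg hμ (hA.eigenvalues_nonneg _))
    (mul_pos hν (hB.eigenvalues_pos _))

theorem exists_squareMinorant_eq_spectralForm (hμ : 0 ≤ μ) (hν : 0 < ν) (hA : X.1.PosSemidef)
    (hB : X.2.PosDef) (K : Matrix m n ℂ) :
    ∃ W, squareMinorant μ ν K W X =
      spectralForm (fun a b => a ^ 2 / (μ * a + ν * b)) X.1 X.2 K K := by
  let a := hA.isHermitian.eigenvalues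
  let b := hB.isHermitian.eigenvalues
  obtain ⟨W, hW⟩ := eigenCoord_surjective hA.isHermitian hB.isHermitian <| of fun i j =>
    (a i / (μ * a i + ν * b j)) • eigenCoord hA.isHermitian hB.isHermitian K i j
  refine ⟨W, ?_⟩
  rw [squareMinorant_eq_sum hA.isHermitian hB.isHermitian,
    spectralForm_of_isHermitian hA.isHermitian hB.isHermitian, hW]
  refine Finset.sum_congr rfl fun x _ => two_mul_inner_smul_sub_eq_sq_div_mul_inner ?_ _
  exact (add_pos_of_nonneg_of_pos (mul_nonneg hμ (hA.eigenvalues_nonneg _))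
    (mul_pos hν (hB.eigenvalues_pos _))).ne'

end SquareMinorant

/-- The kernel `f` gives a form `⟪K, f(L_A, R_B) K⟫` that is jointly convex in a positive
semidefinite `A` and a positive definite `B`, of the sizes given by `m` and `n`, for every `K`. -/
def JointlyTraceConvex (m n : Type*) [Fintype m] [Fintype n] [DecidableEq m] [DecidableEq n]
    (f : ℝ → ℝ → ℝ) : Prop :=
  ∀ K : Matrix m n ℂ,
    ConvexOn ℝ ({A : Matrix m m ℂ | A.PosSemidef} ×ˢ {B : Matrix n n ℂ | B.PosDef})
      fun X => spectralForm f X.1 X.2 K K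

namespace JointlyTraceConvex

variable {f g : ℝ → ℝ → ℝ}

theorem congr (hf : JointlyTraceConvex m n f) (h : ∀ a b, 0 ≤ a → 0 < b → f a b = g a b) :
    JointlyTraceConvex m n g :=
  fun K => (hf K).congr fun _ hX => spectralForm_congr hX.1 hX.2 h K K

theorem integral {α : Type*} [MeasurableSpace α] {ρ : Measure α} {F : α → ℝ → ℝ → ℝ}
    (hF : ∀ᵐ t ∂ρ, JointlyTraceConvex m n (F t))
    (h_integrable : ∀ a b, 0 ≤ a → 0 < b → Integrable (F · a b) ρ) :
    JointlyTraceConvex m n fun a b => ∫ t, F t a b ∂ρ := by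
  intro K
  have h_convex := integral_convexOn_of_integrand_ae
    (f := fun t (X : Matrix m m ℂ × Matrix n n ℂ) => spectralForm (F t) X.1 X.2 K K)
    (convex_setOf_posSemidef.prod convex_setOf_posDef) (hF.mono fun _ ht => ht K)
    fun _ hX => integrable_spectralForm h_integrable hX.1 hX.2 K K
  exact h_convex.congr fun _ hX => integral_spectralForm h_integrable hX.1 hX.2 K K

end JointlyTraceConvex

theorem jointlyTraceConvex_fst : JointlyTraceConvex m n fun a _ => a :=
  fun K => ((reTraceForm K K ∘ₗ .fst ℝ _ _).convexOn
    (convex_setOf_posSemidef.prod convex_setOf_posDef)).congr fun _ hX =>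
      reTraceForm_eq_spectralForm hX.1.isHermitian hX.2.isHermitian K K

theorem jointlyTraceConvex_sq_div {μ ν : ℝ} (hμ : 0 ≤ μ) (hν : 0 < ν) :
    JointlyTraceConvex m n fun a b => a ^ 2 / (μ * a + ν * b) := by
  refine fun K => convexOn_of_exists_linearMap_le
    (convex_setOf_posSemidef.prod convex_setOf_posDef) ?_
  rintro X ⟨hA, hB⟩
  obtain ⟨W, hW⟩ := exists_squareMinorant_eq_spectralForm hμ hν hA hB K
  exact ⟨squareMinorant μ ν K W, hW, fun Y hY =>
    squareMinorant_le_spectralForm hμ hν hY.1 hY.2 K W⟩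

theorem jointlyTraceConvex_mul_rpowIntegrand₀₁_div {s t : ℝ} (hs : s ∈ Ioo 0 1) (ht : 0 < t) :
    JointlyTraceConvex m n fun a b => a * rpowIntegrand₀₁ s t (a / b) :=
  (jointlyTraceConvex_sq_div (rpow_nonneg ht.le (1 - s)) (rpow_pos_of_pos ht (2 - s))).congr
    fun _ _ ha hb => (mul_rpowIntegrand₀₁_div hs ht ha hb).symm

theorem jointlyTraceConvex_rpow_of_mem_Ioo {s : ℝ} (hs : s ∈ Ioo 0 1) :
    JointlyTraceConvex m n fun a b => a ^ (1 + s) * b ^ (-s) := by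
  obtain ⟨ρ, hρ⟩ := exists_measure_rpow_eq_integral_rpowIntegrand₀₁ hs
  have h_integrable (a b : ℝ) (ha : 0 ≤ a) (hb : 0 < b) :
      IntegrableOn (fun t => a * rpowIntegrand₀₁ s t (a / b)) (Ioi 0) ρ :=
    (hρ _ (div_nonneg ha hb.le)).1.const_mul _
  have h_integral (a b : ℝ) (ha : 0 ≤ a) (hb : 0 < b) :
      ∫ t in Ioi 0, a * rpowIntegrand₀₁ s t (a / b) ∂ρ = a ^ (1 + s) * b ^ (-s) := by
    rw [integral_const_mul, ← (hρ _ (div_nonneg ha hb.le)).2, mul_div_rpow hs.1.le ha hb.le]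
  have h_convex : ∀ᵐ t ∂ρ.restrict (Ioi 0),
      JointlyTraceConvex m n fun a b => a * rpowIntegrand₀₁ s t (a / b) :=
    ae_restrict_of_forall_mem measurableSet_Ioi fun _ ht =>
      jointlyTraceConvex_mul_rpowIntegrand₀₁_div hs ht
  exact (JointlyTraceConvex.integral h_convex h_integrable).congr h_integral

theorem jointlyTraceConvex_rpow {s : ℝ} (hs : s ∈ Icc 0 1) :
    JointlyTraceConvex m n fun a b => a ^ (1 + s) * b ^ (-s) := by
  rcases hs.1.eq_or_lt with rfl | hs_pos
  · refine jointlyTraceConvex_fst.congr fun a b _ _ => ?_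
    rw [add_zero, neg_zero, rpow_one, rpow_zero, mul_one]
  rcases hs.2.eq_or_lt with rfl | hs_lt
  · refine (jointlyTraceConvex_sq_div le_rfl one_pos).congr fun a b _ _ => ?_
    rw [one_add_one_eq_two, rpow_two, rpow_neg_one, zero_mul, one_mul, zero_add, div_eq_mul_inv]
  · exact jointlyTraceConvex_rpow_of_mem_Ioo ⟨hs_pos, hs_lt⟩

theorem ando_convexity_trace_general {p : ℝ} (hp : p ∈ Icc (-1) 0) (K : Matrix m n ℂ) :
    ConvexOn ℝ ({A : Matrix m m ℂ | A.PosSemidef} ×ˢ {B : Matrix n n ℂ | B.PosDef})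
      fun X => (mpow X.2 p * Kᴴ * mpow X.1 (1 - p) * K).trace.re := by
  have hs : -p ∈ Icc 0 1 := ⟨neg_nonneg.2 hp.2, neg_le.1 hp.1⟩
  refine (jointlyTraceConvex_rpow hs K).congr fun X hX => ?_
  rw [neg_neg, ← sub_eq_add_neg]
  exact (re_trace_mfun_mul_conjTranspose_mul_mfun_mul hX.1.isHermitian hX.2.isHermitian
    (· ^ (1 - p)) (· ^ p) K K).symm

theorem ando_convexity_trace {n : ℕ} (K : Matrix (Fin n) (Fin n) ℂ) (p : ℝ)
    (hp0 : -1 ≤ p) (hp1 : p < 0) (Z₀ Z₁ : Matrix (Fin n) (Fin n) ℂ)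
    (hZ₀ : Z₀.PosDef) (hZ₁ : Z₁.PosDef) (t : ℝ) (ht0 : 0 ≤ t) (ht1 : t ≤ 1) :
    (mpow (((1 - t : ℝ) : ℂ) • Z₀ + ((t : ℝ) : ℂ) • Z₁) p * Kᴴ *
        mpow (((1 - t : ℝ) : ℂ) • Z₀ + ((t : ℝ) : ℂ) • Z₁) (1 - p) * K).trace.re ≤
      (1 - t) * (mpow Z₀ p * Kᴴ * mpow Z₀ (1 - p) * K).trace.re +
        t * (mpow Z₁ p * Kᴴ * mpow Z₁ (1 - p) * K).trace.re := by
  simpa only [Prod.smul_mk, Prod.mk_add_mk, Complex.coe_smul, smul_eq_mul] using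
    (ando_convexity_trace_general ⟨hp0, hp1.le⟩ K).2 (x := (Z₀, Z₀)) (y := (Z₁, Z₁))
      ⟨hZ₀.posSemidef, hZ₀⟩ ⟨hZ₁.posSemidef, hZ₁⟩ (sub_nonneg.2 ht1) ht0 (sub_add_cancel 1 t)
end

section
/- (Monotonicity under quantum operations, α > 1) Let ρ, σ be positive definite n×n matrices with tr(ρ) = 1 and let E be a completely positive trace preserving map on n×n matrices with E(ρ), E(σ) positive definite. Then for α > 1, (α−1)^{−1} log tr((E(σ)^{(1−α)/(2α)} E(ρ) E(σ)^{(1−α)/(2α)})^α) ≤ (α−1)^{−1} log tr((σ^{(1−α)/(2α)} ρ σ^{(1−α)/(2α)})^α). -/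
open Matrix ComplexOrder

/-!
A Kraus map `Φ` contracts the trace norm, and since `Φ` maps `σ` to `W := Φ σ`, the map
`X ↦ W ^ (-1/2) * Φ (σ ^ (1/2) * X * σ ^ (1/2)) * W ^ (-1/2)` is unital and contracts the operator
norm. Interpolating between the two through the analytic family
`Θ_z X = W ^ (-z/2) * Φ (σ ^ (z/2) * X * σ ^ (z/2)) * W ^ (-z/2)`, Hadamard's three lines theorem
applied to `z ↦ tr (Q ^ (pz) * Θ_z (R ^ (p(1-z))))` with `Q := Θ_t R` and `t = 1 - 1/p` shows that
`Θ_t` contracts the Schatten `p`-norm of a positive definite `R`. For `p = α` and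
`R = σ ^ (-t/2) * ρ * σ ^ (-t/2)` one finds `Q = W ^ (-t/2) * Φ ρ * W ^ (-t/2)`, so this is the
data-processing inequality.
-/

open Complex.HadamardThreeLines Asymptotics
open scoped Matrix.Norms.Frobenius

noncomputable section

section FunctionalCalculus

variable {n : Type*} [Fintype n] [DecidableEq n] {A B : Matrix n n ℂ}

/-- Functional calculus of a Hermitian matrix for complex-valued functions, extending `mfun`. -/
def mcfun (f : ℝ → ℂ) (A : Matrix n n ℂ) : Matrix n n ℂ :=
  if hA : A.IsHermitian then
    Unitary.conjStarAlgAut ℂ _ hA.eigenvectorUnitary (diagonal (f ∘ hA.eigenvalues))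
  else 0

theorem mcfun_eq (hA : A.IsHermitian) (f : ℝ → ℂ) :
    mcfun f A =
      Unitary.conjStarAlgAut ℂ _ hA.eigenvectorUnitary (diagonal (f ∘ hA.eigenvalues)) :=
  dif_pos hA

theorem mcfun_congr (hA : A.IsHermitian) {f g : ℝ → ℂ}
    (h : ∀ i, f (hA.eigenvalues i) = g (hA.eigenvalues i)) : mcfun f A = mcfun g A := by
  rw [mcfun_eq hA, mcfun_eq hA, show f ∘ hA.eigenvalues = g ∘ hA.eigenvalues from funext h]

theorem mcfun_ofReal (f : ℝ → ℝ) (A : Matrix n n ℂ) :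
    mcfun (fun x => (f x : ℂ)) A = mfun f A := by
  simp only [mcfun, mfun, Unitary.conjStarAlgAut_apply, Function.comp_def]

theorem mcfun_id (hA : A.IsHermitian) : mcfun (fun x => (x : ℂ)) A = A :=
  (mcfun_eq hA _).trans hA.spectral_theorem.symm

theorem mcfun_one (hA : A.IsHermitian) : mcfun (fun _ => 1) A = 1 := by
  rw [mcfun_eq hA, show (fun _ : ℝ => (1 : ℂ)) ∘ hA.eigenvalues = fun _ => 1 from rfl,
    diagonal_one, map_one]

theorem mcfun_mul (f g : ℝ → ℂ) (A : Matrix n n ℂ) :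
    mcfun f A * mcfun g A = mcfun (fun x => f x * g x) A := by
  by_cases hA : A.IsHermitian
  · simp only [mcfun_eq hA, ← map_mul, diagonal_mul_diagonal, Function.comp_def]
  · simp [mcfun, hA]

theorem conjTranspose_mcfun (f : ℝ → ℂ) (A : Matrix n n ℂ) :
    (mcfun f A)ᴴ = mcfun (fun x => star (f x)) A := by
  by_cases hA : A.IsHermitian
  · rw [mcfun_eq hA, mcfun_eq hA, ← star_eq_conjTranspose, ← map_star, star_eq_conjTranspose,
      diagonal_conjTranspose]
    rfl
  · simp [mcfun, hA]

/-- Complex power of a Hermitian matrix, the analytic continuation of `mpow` in the exponent. -/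
def mcpow (A : Matrix n n ℂ) (z : ℂ) : Matrix n n ℂ :=
  mcfun (fun x => (x : ℂ) ^ z) A

theorem mcpow_ofReal (hA : A.PosDef) (x : ℝ) : mcpow A x = mpow A x := by
  rw [mpow, ← mcfun_ofReal]
  exact mcfun_congr hA.1 fun i => (Complex.ofReal_cpow (hA.eigenvalues_pos i).le x).symm

theorem mcpow_zero (hA : A.PosDef) : mcpow A 0 = 1 := by
  simpa only [mcpow, Complex.cpow_zero] using mcfun_one hA.1

theorem mcpow_one (hA : A.PosDef) : mcpow A 1 = A := by
  simpa only [mcpow, Complex.cpow_one] using mcfun_id hA.1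

theorem mcpow_mul_mcpow (hA : A.PosDef) (z w : ℂ) :
    mcpow A z * mcpow A w = mcpow A (z + w) :=
  (mcfun_mul _ _ A).trans <| mcfun_congr hA.1 fun i =>
    (Complex.cpow_add z w (Complex.ofReal_ne_zero.2 (hA.eigenvalues_pos i).ne')).symm

theorem mcpow_mul_mcpow_neg (hA : A.PosDef) (z : ℂ) : mcpow A z * mcpow A (-z) = 1 := by
  rw [mcpow_mul_mcpow hA, add_neg_cancel, mcpow_zero hA]

theorem isUnit_mcpow (hA : A.PosDef) (z : ℂ) : IsUnit (mcpow A z) :=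
  IsUnit.of_mul_eq_one _ (mcpow_mul_mcpow_neg hA z)

theorem conjTranspose_mcpow (hA : A.PosDef) (z : ℂ) : (mcpow A z)ᴴ = mcpow A (star z) := by
  refine (conjTranspose_mcfun _ A).trans (mcfun_congr hA.1 fun i => ?_)
  have harg : (hA.1.eigenvalues i : ℂ).arg ≠ Real.pi := by
    rw [Complex.arg_ofReal_of_nonneg (hA.eigenvalues_pos i).le]
    exact Real.pi_ne_zero.symm
  simpa only [Complex.conj_ofReal, Complex.star_def] using (Complex.cpow_conj _ z harg).symm

theorem mcpow_mul_conjTranspose_mcpow (hA : A.PosDef) (z : ℂ) :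
    mcpow A z * (mcpow A z)ᴴ = mpow A (2 * z.re) := by
  rw [conjTranspose_mcpow hA, mcpow_mul_mcpow hA, ← mcpow_ofReal hA, Complex.star_def,
    Complex.add_conj]

theorem conjTranspose_mcpow_mul_mcpow (hA : A.PosDef) (z : ℂ) :
    (mcpow A z)ᴴ * mcpow A z = mpow A (2 * z.re) := by
  rw [← mcpow_mul_conjTranspose_mcpow hA, conjTranspose_mcpow hA, mcpow_mul_mcpow hA,
    mcpow_mul_mcpow hA, add_comm]

theorem mpow_one (hA : A.PosDef) : mpow A 1 = A := by
  rw [← mcpow_ofReal hA, Complex.ofReal_one, mcpow_one hA]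

theorem mcpow_mul_self_mul_conjTranspose_mcpow (hA : A.PosDef) {z : ℂ} (hz : 2 * z.re = -1) :
    mcpow A z * A * (mcpow A z)ᴴ = 1 := by
  have hexp : z + 1 + star z = 0 := by
    rw [add_right_comm, Complex.star_def, Complex.add_conj, hz]
    simp
  calc mcpow A z * A * (mcpow A z)ᴴ = mcpow A z * mcpow A 1 * mcpow A (star z) := by
        rw [mcpow_one hA, conjTranspose_mcpow hA]
    _ = 1 := by rw [mcpow_mul_mcpow hA, mcpow_mul_mcpow hA, hexp, mcpow_zero hA]

theorem conjTranspose_mcpow_mul_self_mul_mcpow (hA : A.PosDef) {z : ℂ} (hz : 2 * z.re = -1) :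
    (mcpow A z)ᴴ * A * mcpow A z = 1 := by
  have hstar : 2 * (star z).re = -1 := hz
  simpa only [conjTranspose_mcpow hA, star_star] using
    mcpow_mul_self_mul_conjTranspose_mcpow hA hstar

theorem mcpow_mem_unitaryGroup (hA : A.PosDef) {z : ℂ} (hz : z.re = 0) :
    mcpow A z ∈ unitaryGroup n ℂ := by
  rw [mem_unitaryGroup_iff, star_eq_conjTranspose, mcpow_mul_conjTranspose_mcpow hA, hz, mul_zero,
    ← mcpow_ofReal hA, Complex.ofReal_zero, mcpow_zero hA]

theorem posDef_mpow_mul_mul_mpow (hA : A.PosDef) (hB : B.PosDef) (x : ℝ) :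
    (mpow A x * B * mpow A x).PosDef := by
  have hstar : star (mcpow A x) = mcpow A x := by
    rw [star_eq_conjTranspose, conjTranspose_mcpow hA, Complex.star_def, Complex.conj_ofReal]
  have h := (isUnit_mcpow hA x).posDef_star_right_conjugate_iff.2 hB
  rwa [hstar, mcpow_ofReal hA] at h

theorem posDef_mpow (hA : A.PosDef) (x : ℝ) : (mpow A x).PosDef := by
  have h := posDef_mpow_mul_mul_mpow hA PosDef.one (x / 2)
  rwa [mul_one, ← mcpow_ofReal hA, mcpow_mul_mcpow hA, ← Complex.ofReal_add, add_halves,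
    mcpow_ofReal hA] at h

end FunctionalCalculus

section Frobenius

variable {l m n κ : Type*} [Fintype l] [Fintype m] [Fintype n] [Fintype κ]

theorem frobenius_norm_sq_eq_sum (A : Matrix m n ℂ) : ‖A‖ ^ 2 = ∑ i, ∑ j, ‖A i j‖ ^ 2 := by
  rw [frobenius_norm_def, ← Real.sqrt_eq_rpow, Real.sq_sqrt (by positivity)]
  simp only [Real.rpow_two]

theorem frobenius_norm_sq_eq_trace (A : Matrix m n ℂ) : ‖A‖ ^ 2 = (A * Aᴴ).trace.re := by
  simp only [frobenius_norm_sq_eq_sum, trace, diag_apply, mul_apply, conjTranspose_apply,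
    Complex.re_sum, Complex.star_def, Complex.mul_conj, Complex.ofReal_re,
    Complex.normSq_eq_norm_sq]

theorem norm_trace_mul_le (A : Matrix m n ℂ) (B : Matrix n m ℂ) :
    ‖(A * B).trace‖ ≤ ‖A‖ * ‖B‖ := by
  have hsqrt {k l : Type _} [Fintype k] [Fintype l] (C : Matrix k l ℂ) :
      ‖C‖ = √(∑ p : k × l, ‖C p.1 p.2‖ ^ 2) := by
    rw [Fintype.sum_prod_type' fun i j => ‖C i j‖ ^ 2, ← frobenius_norm_sq_eq_sum,
      Real.sqrt_sq (norm_nonneg C)]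
  calc ‖(A * B).trace‖ = ‖∑ p : m × n, A p.1 p.2 * Bᵀ p.1 p.2‖ := by
        rw [Fintype.sum_prod_type]; rfl
    _ ≤ ∑ p : m × n, ‖A p.1 p.2‖ * ‖Bᵀ p.1 p.2‖ := by
        simpa only [norm_mul] using norm_sum_le Finset.univ fun p : m × n => A p.1 p.2 * Bᵀ p.1 p.2
    _ ≤ √(∑ p : m × n, ‖A p.1 p.2‖ ^ 2) * √(∑ p : m × n, ‖Bᵀ p.1 p.2‖ ^ 2) :=
        Real.sum_mul_le_sqrt_mul_sqrt _ _ _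
    _ = ‖A‖ * ‖B‖ := by rw [← hsqrt, ← hsqrt, frobenius_norm_transpose]

theorem norm_trace_sum_mul_le (X : κ → Matrix m n ℂ) (Y : κ → Matrix n m ℂ) :
    ‖(∑ k, X k * Y k).trace‖ ≤
      √(∑ k, (X k * (X k)ᴴ).trace.re) * √(∑ k, ((Y k)ᴴ * Y k).trace.re) := by
  calc ‖(∑ k, X k * Y k).trace‖ ≤ ∑ k, ‖X k‖ * ‖Y k‖ := by
        rw [trace_sum]
        exact norm_sum_le_of_le _ fun k _ => norm_trace_mul_le (X k) (Y k)
    _ ≤ √(∑ k, ‖X k‖ ^ 2) * √(∑ k, ‖Y k‖ ^ 2) := Real.sum_mul_le_sqrt_mul_sqrt _ _ _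
    _ = _ := by simp only [frobenius_norm_sq_eq_trace, trace_mul_comm (Y _)]

theorem trace_mul_mul_conjTranspose_of_mem_unitaryGroup [DecidableEq n] {U : Matrix n n ℂ}
    (hU : U ∈ unitaryGroup n ℂ) (X : Matrix n n ℂ) : (U * X * Uᴴ).trace = X.trace := by
  rw [trace_mul_cycle, ← star_eq_conjTranspose, mem_unitaryGroup_iff'.1 hU, one_mul]

theorem frobenius_norm_unitary_mul [DecidableEq n] {U : Matrix n n ℂ}
    (hU : U ∈ unitaryGroup n ℂ) (X : Matrix n n ℂ) : ‖U * X‖ = ‖X‖ := by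
  rw [← sq_eq_sq₀ (norm_nonneg _) (norm_nonneg _), frobenius_norm_sq_eq_trace,
    frobenius_norm_sq_eq_trace, conjTranspose_mul,
    ← trace_mul_mul_conjTranspose_of_mem_unitaryGroup hU (X * Xᴴ)]
  simp only [Matrix.mul_assoc]

theorem frobenius_norm_mul_unitary [DecidableEq n] {U : Matrix n n ℂ}
    (hU : U ∈ unitaryGroup n ℂ) (X : Matrix n n ℂ) : ‖X * U‖ = ‖X‖ := by
  rw [← frobenius_norm_conjTranspose, conjTranspose_mul, ← star_eq_conjTranspose U,
    frobenius_norm_unitary_mul (Unitary.star_mem hU), frobenius_norm_conjTranspose]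

theorem frobenius_norm_mcpow_sq [DecidableEq n] {A : Matrix n n ℂ} (hA : A.PosDef) (z : ℂ) :
    ‖mcpow A z‖ ^ 2 = (mpow A (2 * z.re)).trace.re := by
  rw [frobenius_norm_sq_eq_trace, mcpow_mul_conjTranspose_mcpow hA]

end Frobenius

section Kraus

variable {m n κ : Type*} [Fintype n] [Fintype κ]

/-- The completely positive map with Kraus operators `V k`, possibly between matrix algebras of
different sizes. -/
def krausMap (V : κ → Matrix m n ℂ) : Matrix n n ℂ →ₗ[ℂ] Matrix m m ℂ where
  toFun X := ∑ k, V k * X * (V k)ᴴ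
  map_add' X Y := by simp only [Matrix.mul_add, Matrix.add_mul, Finset.sum_add_distrib]
  map_smul' c X := by
    simp only [Matrix.mul_smul, Matrix.smul_mul, Finset.smul_sum, RingHom.id_apply]

theorem krausMap_apply (V : κ → Matrix m n ℂ) (X : Matrix n n ℂ) :
    krausMap V X = ∑ k, V k * X * (V k)ᴴ :=
  rfl

variable [Fintype m]

theorem trace_krausMap [DecidableEq n] {V : κ → Matrix m n ℂ} (hV : ∑ k, (V k)ᴴ * V k = 1)
    (X : Matrix n n ℂ) : (krausMap V X).trace = X.trace := by
  calc (krausMap V X).trace = ∑ k, ((V k)ᴴ * V k * X).trace := by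
        rw [krausMap_apply, trace_sum]
        exact Finset.sum_congr rfl fun k _ => trace_mul_cycle _ _ _
    _ = X.trace := by rw [← trace_sum, ← Finset.sum_mul, hV, one_mul]

theorem norm_trace_mul_krausMap_mul_le (V : κ → Matrix m n ℂ) (H J : Matrix m m ℂ)
    (K L : Matrix n n ℂ) :
    ‖(H * krausMap V (K * L) * J).trace‖ ≤
      √(H * krausMap V (K * Kᴴ) * Hᴴ).trace.re * √(Jᴴ * krausMap V (Lᴴ * L) * J).trace.re := by
  simpa only [krausMap_apply, Matrix.mul_sum, Matrix.sum_mul, trace_sum, Complex.re_sum,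
    conjTranspose_mul, conjTranspose_conjTranspose, Matrix.mul_assoc] using
    norm_trace_sum_mul_le (fun k => H * V k * K) fun k => L * (V k)ᴴ * J

variable [DecidableEq n] [DecidableEq m]

/-- The analytic family interpolating between a Kraus map (`z = 0`) and its unital rescaling
`X ↦ W ^ (-1/2) * Φ (σ ^ (1/2) * X * σ ^ (1/2)) * W ^ (-1/2)`, where `W = Φ σ` (`z = 1`). -/
def rescaledKrausMap (V : κ → Matrix m n ℂ) (σ : Matrix n n ℂ) (z : ℂ) (X : Matrix n n ℂ) :
    Matrix m m ℂ :=
  mcpow (krausMap V σ) (-(z / 2)) * krausMap V (mcpow σ (z / 2) * X * mcpow σ (z / 2)) *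
    mcpow (krausMap V σ) (-(z / 2))

variable {V : κ → Matrix m n ℂ} {σ : Matrix n n ℂ}

theorem norm_trace_mul_rescaledKrausMap_le (hV : ∑ k, (V k)ᴴ * V k = 1) (hσ : σ.PosDef)
    (hW : (krausMap V σ).PosDef) {z : ℂ} (hz : z.re = 0) {U : Matrix m m ℂ}
    (hU : U ∈ unitaryGroup m ℂ) (K L : Matrix n n ℂ) :
    ‖(U * rescaledKrausMap V σ z (K * L)).trace‖ ≤ ‖K‖ * ‖L‖ := by
  set w := mcpow (krausMap V σ) (-(z / 2))
  set s := mcpow σ (z / 2)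
  have hw : w ∈ unitaryGroup m ℂ := mcpow_mem_unitaryGroup hW (by simp [hz])
  have hs : s ∈ unitaryGroup n ℂ := mcpow_mem_unitaryGroup hσ (by simp [hz])
  have hleft : (U * w * krausMap V (s * K * (s * K)ᴴ) * (U * w)ᴴ).trace.re = ‖K‖ ^ 2 := by
    rw [trace_mul_mul_conjTranspose_of_mem_unitaryGroup (mul_mem hU hw), trace_krausMap hV,
      ← frobenius_norm_sq_eq_trace, frobenius_norm_unitary_mul hs]
  have hright : (wᴴ * krausMap V ((L * s)ᴴ * (L * s)) * w).trace.re = ‖L‖ ^ 2 := by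
    have h := trace_mul_mul_conjTranspose_of_mem_unitaryGroup (Unitary.star_mem hw)
      (krausMap V ((L * s)ᴴ * (L * s)))
    rw [star_eq_conjTranspose, conjTranspose_conjTranspose] at h
    rw [h, trace_krausMap hV, trace_mul_comm, ← frobenius_norm_sq_eq_trace,
      frobenius_norm_mul_unitary hs]
  have h := norm_trace_mul_krausMap_mul_le V (U * w) w (s * K) (L * s)
  rw [hleft, hright, Real.sqrt_sq (norm_nonneg K), Real.sqrt_sq (norm_nonneg L)] at h
  simpa only [rescaledKrausMap, Matrix.mul_assoc] using h

theorem norm_trace_mul_rescaledKrausMap_mul_le (hσ : σ.PosDef) (hW : (krausMap V σ).PosDef)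
    {z : ℂ} (hz : z.re = 1) {U : Matrix n n ℂ} (hU : U ∈ unitaryGroup n ℂ) (Y Z : Matrix m m ℂ) :
    ‖(Y * rescaledKrausMap V σ z U * Z).trace‖ ≤ ‖Y‖ * ‖Z‖ := by
  set w := mcpow (krausMap V σ) (-(z / 2))
  set s := mcpow σ (z / 2)
  have hre : 2 * (z / 2).re = 1 := by simp [hz]
  have hre' : 2 * (-(z / 2)).re = -1 := by simp [hz]
  have hleft : (Y * w * krausMap V (s * U * (s * U)ᴴ) * (Y * w)ᴴ).trace.re = ‖Y‖ ^ 2 := by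
    have hsU : s * U * (s * U)ᴴ = σ := by
      rw [conjTranspose_mul, Matrix.mul_assoc, ← Matrix.mul_assoc U, ← star_eq_conjTranspose U,
        mem_unitaryGroup_iff.1 hU, one_mul, mcpow_mul_conjTranspose_mcpow hσ, hre, mpow_one hσ]
    have hYw : Y * w * krausMap V σ * (Y * w)ᴴ = Y * (w * krausMap V σ * wᴴ) * Yᴴ := by
      simp only [conjTranspose_mul, Matrix.mul_assoc]
    rw [hsU, hYw, mcpow_mul_self_mul_conjTranspose_mcpow hW hre', mul_one,
      frobenius_norm_sq_eq_trace]
  have hright : ((w * Z)ᴴ * krausMap V (sᴴ * s) * (w * Z)).trace.re = ‖Z‖ ^ 2 := by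
    have hwZ : (w * Z)ᴴ * krausMap V σ * (w * Z) = Zᴴ * (wᴴ * krausMap V σ * w) * Z := by
      simp only [conjTranspose_mul, Matrix.mul_assoc]
    rw [conjTranspose_mcpow_mul_mcpow hσ, hre, mpow_one hσ, hwZ,
      conjTranspose_mcpow_mul_self_mul_mcpow hW hre', mul_one, trace_mul_comm,
      frobenius_norm_sq_eq_trace]
  have h := norm_trace_mul_krausMap_mul_le V (Y * w) (w * Z) (s * U) s
  rw [hleft, hright, Real.sqrt_sq (norm_nonneg Y), Real.sqrt_sq (norm_nonneg Z)] at h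
  simpa only [rescaledKrausMap, Matrix.mul_assoc] using h

theorem rescaledKrausMap_mpow_mul_mul_mpow (hσ : σ.PosDef) (hW : (krausMap V σ).PosDef) (t : ℝ)
    (X : Matrix n n ℂ) :
    rescaledKrausMap V σ t (mpow σ (-(t / 2)) * X * mpow σ (-(t / 2))) =
      mpow (krausMap V σ) (-(t / 2)) * krausMap V X * mpow (krausMap V σ) (-(t / 2)) := by
  have hX : mcpow σ (t / 2) * (mcpow σ (-(t / 2)) * X * mcpow σ (-(t / 2))) * mcpow σ (t / 2) =
      mcpow σ (t / 2) * mcpow σ (-(t / 2)) * X * (mcpow σ (-(t / 2)) * mcpow σ (t / 2)) := by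
    simp only [Matrix.mul_assoc]
  simp only [rescaledKrausMap, ← mcpow_ofReal hσ, ← mcpow_ofReal hW, Complex.ofReal_neg,
    Complex.ofReal_div, Complex.ofReal_ofNat]
  rw [hX, mcpow_mul_mcpow hσ, mcpow_mul_mcpow hσ, add_neg_cancel, neg_add_cancel, mcpow_zero hσ,
    one_mul, mul_one]

end Kraus

section ThreeLines

variable {E F : Type*} [NormedAddCommGroup E] [NormedSpace ℂ E] [NormedAddCommGroup F]
  [NormedSpace ℂ F]

/-- An entire function that is bounded on the strip `0 ≤ re z ≤ 1`, so that Hadamard's three lines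
theorem applies to it. -/
structure EntireBoundedOnStrip (f : ℂ → E) : Prop where
  differentiable : Differentiable ℂ f
  isBigO_one : f =O[Filter.principal (verticalClosedStrip 0 1)] (1 : ℂ → ℝ)

namespace EntireBoundedOnStrip

theorem mul {R : Type*} [NormedRing R] [NormedAlgebra ℂ R] {f g : ℂ → R}
    (hf : EntireBoundedOnStrip f) (hg : EntireBoundedOnStrip g) :
    EntireBoundedOnStrip fun z => f z * g z :=
  ⟨hf.differentiable.mul hg.differentiable,
    (hf.isBigO_one.mul hg.isBigO_one).congr_right fun _ => mul_one 1⟩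

theorem linearMap_comp [FiniteDimensional ℂ E] (T : E →ₗ[ℂ] F) {f : ℂ → E}
    (hf : EntireBoundedOnStrip f) : EntireBoundedOnStrip fun z => T (f z) :=
  ⟨T.toContinuousLinearMap.differentiable.comp hf.differentiable,
    (T.toContinuousLinearMap.isBigO_comp f _).trans hf.isBigO_one⟩

theorem pi {ι : Type*} [Fintype ι] {f : ℂ → ι → E}
    (hf : ∀ i, EntireBoundedOnStrip fun z => f z i) : EntireBoundedOnStrip f :=
  ⟨differentiable_pi.2 fun i => (hf i).differentiable, isBigO_pi.2 fun i => (hf i).isBigO_one⟩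

theorem const_cpow {x : ℝ} (hx : 0 < x) (a b : ℝ) :
    EntireBoundedOnStrip fun z => (x : ℂ) ^ (a * z + b) := by
  refine ⟨fun z => DifferentiableAt.const_cpow (by fun_prop)
    (Or.inl (Complex.ofReal_ne_zero.2 hx.ne')), isBigO_principal.2 ?_⟩
  have hcont : Continuous fun s : ℝ => x ^ (a * s + b) :=
    continuous_const.rpow (by fun_prop) fun _ => Or.inl hx.ne'
  obtain ⟨C, hC⟩ := isCompact_Icc.exists_bound_of_continuousOn (s := Set.Icc 0 1) hcont.continuousOn
  refine ⟨C, fun z hz => ?_⟩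
  simpa [Complex.norm_cpow_eq_rpow_re_of_pos hx] using (le_abs_self _).trans (hC z.re hz)

theorem mcpow {n : Type*} [Fintype n] [DecidableEq n] {A : Matrix n n ℂ} (hA : A.PosDef)
    (a b : ℝ) {u : ℂ → ℂ} (hu : ∀ z, u z = a * z + b) :
    EntireBoundedOnStrip fun z => mcpow A (u z) := by
  have hdiag : EntireBoundedOnStrip fun z => fun i => (hA.1.eigenvalues i : ℂ) ^ (a * z + b) :=
    pi fun i => const_cpow (hA.eigenvalues_pos i) a b
  have h := (hdiag.linearMap_comp (diagonalLinearMap n ℂ ℂ)).linearMap_comp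
    (Unitary.conjStarAlgAut ℂ _ hA.1.eigenvectorUnitary).toAlgEquiv.toLinearMap
  simp only [_root_.mcpow, mcfun_eq hA.1, hu]
  exact h

theorem norm_le_rpow_mul_rpow {f : ℂ → E} (hf : EntireBoundedOnStrip f) {a b : ℝ}
    (ha : ∀ z : ℂ, z.re = 0 → ‖f z‖ ≤ a) (hb : ∀ z : ℂ, z.re = 1 → ‖f z‖ ≤ b) {t : ℝ}
    (ht : t ∈ Set.Icc 0 1) : ‖f t‖ ≤ a ^ (1 - t) * b ^ t := by
  obtain ⟨C, hC⟩ := isBigO_principal.1 hf.isBigO_one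
  have hbdd : BddAbove ((norm ∘ f) '' verticalClosedStrip 0 1) :=
    ⟨C, Set.forall_mem_image.2 fun z hz => by simpa using hC z hz⟩
  exact norm_le_interp_of_mem_verticalClosedStrip₀₁' f (z := t) ht hf.differentiable.diffContOnCl
    hbdd ha hb

theorem rescaledKrausMap {m n κ : Type*} [Fintype m] [Fintype n] [Fintype κ] [DecidableEq m]
    [DecidableEq n] {V : κ → Matrix m n ℂ} {σ : Matrix n n ℂ} (hσ : σ.PosDef)
    (hW : (krausMap V σ).PosDef) {X : ℂ → Matrix n n ℂ} (hX : EntireBoundedOnStrip X) :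
    EntireBoundedOnStrip fun z => rescaledKrausMap V σ z (X z) := by
  have hs := mcpow hσ (1 / 2) 0 (u := fun z => z / 2) fun z => by push_cast; ring
  have hw := mcpow hW (-1 / 2) 0 (u := fun z => -(z / 2)) fun z => by push_cast; ring
  exact (hw.mul (((hs.mul hX).mul hs).linearMap_comp (krausMap V))).mul hw

end EntireBoundedOnStrip

end ThreeLines

theorem le_of_le_rpow_mul_rpow {a b t : ℝ} (ha : 0 ≤ a) (hb : 0 ≤ b) (ht : t < 1)
    (h : b ≤ a ^ (1 - t) * b ^ t) : b ≤ a := by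
  rcases hb.eq_or_lt with rfl | hb
  · exact ha
  · have ht' : 0 < 1 - t := sub_pos.2 ht
    rw [← Real.rpow_le_rpow_iff hb.le ha ht', Real.rpow_sub hb, Real.rpow_one]
    exact (div_le_iff₀ (Real.rpow_pos_of_pos hb t)).2 h

theorem nonempty_of_sum_conjTranspose_mul_self_eq_one {m n κ : Type*} [Fintype m] [Fintype κ]
    [DecidableEq n] [Nonempty n] {V : κ → Matrix m n ℂ} (hV : ∑ k, (V k)ᴴ * V k = 1) :
    Nonempty m := by
  by_contra hm
  rw [not_nonempty_iff] at hm
  obtain ⟨i⟩ := ‹Nonempty n›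
  have hii := congrFun₂ hV i i
  simp [Matrix.sum_apply, mul_apply] at hii

section DataProcessing

variable {m n κ : Type*} [Fintype m] [Fintype n] [Fintype κ] [DecidableEq m] [DecidableEq n]
  {V : κ → Matrix m n ℂ} {ρ σ R : Matrix n n ℂ} {Q : Matrix m m ℂ}

theorem norm_trace_mcpow_mul_rescaledKrausMap_mcpow_le (hV : ∑ k, (V k)ᴴ * V k = 1)
    (hσ : σ.PosDef) (hW : (krausMap V σ).PosDef) (hR : R.PosDef) (hQ : Q.PosDef) (p : ℝ) {t : ℝ}
    (ht : t ∈ Set.Icc 0 1) :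
    ‖(mcpow Q (p * t) * rescaledKrausMap V σ t (mcpow R (p * (1 - t)))).trace‖ ≤
      (mpow R p).trace.re ^ (1 - t) * (mpow Q p).trace.re ^ t := by
  have hX := EntireBoundedOnStrip.mcpow hR (-p) p (u := fun z => p * (1 - z)) fun z => by
    push_cast; ring
  have hY := EntireBoundedOnStrip.mcpow hQ p 0 (u := fun z => p * z) fun z => by simp
  have hf := (hY.mul (hX.rescaledKrausMap hσ hW)).linearMap_comp (traceLinearMap m ℂ ℂ)
  refine hf.norm_le_rpow_mul_rpow (fun z hz => ?_) (fun z hz => ?_) ht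
  · have hU : mcpow Q (p * z) ∈ unitaryGroup m ℂ := mcpow_mem_unitaryGroup hQ (by simp [hz])
    have hnorm : ‖mcpow R (p * (1 - z) / 2)‖ ^ 2 = (mpow R p).trace.re := by
      rw [frobenius_norm_mcpow_sq hR, show 2 * (p * (1 - z) / 2 : ℂ).re = p by simp [hz]; ring]
    have hsplit := mcpow_mul_mcpow hR (p * (1 - z) / 2) (p * (1 - z) / 2)
    rw [add_halves] at hsplit
    simpa only [traceLinearMap_apply, ← hsplit, ← hnorm, sq] using
      norm_trace_mul_rescaledKrausMap_le hV hσ hW hz hU _ _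
  · have hU : mcpow R (p * (1 - z)) ∈ unitaryGroup n ℂ := mcpow_mem_unitaryGroup hR (by simp [hz])
    have hnorm : ‖mcpow Q (p * z / 2)‖ ^ 2 = (mpow Q p).trace.re := by
      rw [frobenius_norm_mcpow_sq hQ, show 2 * (p * z / 2 : ℂ).re = p by simp [hz]; ring]
    have hsplit := mcpow_mul_mcpow hQ (p * z / 2) (p * z / 2)
    rw [add_halves] at hsplit
    have hcycle : (mcpow Q (p * z) * rescaledKrausMap V σ z (mcpow R (p * (1 - z)))).trace =
        (mcpow Q (p * z / 2) * rescaledKrausMap V σ z (mcpow R (p * (1 - z))) *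
          mcpow Q (p * z / 2)).trace := by
      rw [trace_mul_comm _ (mcpow Q (p * z / 2)), ← Matrix.mul_assoc, hsplit]
    simpa only [traceLinearMap_apply, hcycle, ← hnorm, sq] using
      norm_trace_mul_rescaledKrausMap_mul_le hσ hW hz hU _ _

theorem trace_mpow_rescaledKrausMap_le (hV : ∑ k, (V k)ᴴ * V k = 1) (hσ : σ.PosDef)
    (hW : (krausMap V σ).PosDef) (hR : R.PosDef) {p : ℝ} (hp : 1 ≤ p)
    (hQ : (rescaledKrausMap V σ (1 - 1 / p : ℝ) R).PosDef) :
    (mpow (rescaledKrausMap V σ (1 - 1 / p : ℝ) R) p).trace.re ≤ (mpow R p).trace.re := by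
  have hp₀ : 0 < p := one_pos.trans_le hp
  have hpc : (p : ℂ) ≠ 0 := Complex.ofReal_ne_zero.2 hp₀.ne'
  set t : ℝ := 1 - 1 / p with t_def
  set Q := rescaledKrausMap V σ t R
  have ht : t ∈ Set.Ico 0 1 :=
    ⟨sub_nonneg.2 ((div_le_one hp₀).2 hp), sub_lt_self 1 (one_div_pos.2 hp₀)⟩
  have hR_exp : (p * (1 - t) : ℂ) = 1 := by rw [t_def]; push_cast; field_simp; ring
  have hQ_exp : (p * t + 1 : ℂ) = p := by rw [t_def]; push_cast; field_simp; ring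
  have hpow : mcpow Q (p * t) * rescaledKrausMap V σ t (mcpow R (p * (1 - t))) = mpow Q p := by
    calc _ = mcpow Q (p * t) * mcpow Q 1 := by rw [hR_exp, mcpow_one hR, mcpow_one hQ]
      _ = mpow Q p := by rw [mcpow_mul_mcpow hQ, hQ_exp, mcpow_ofReal hQ]
  have h := norm_trace_mcpow_mul_rescaledKrausMap_mcpow_le hV hσ hW hR hQ p ⟨ht.1, ht.2.le⟩
  rw [hpow] at h
  exact le_of_le_rpow_mul_rpow
    (Complex.le_def.1 (posDef_mpow hR p).posSemidef.trace_nonneg).1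
    (Complex.le_def.1 (posDef_mpow hQ p).posSemidef.trace_nonneg).1 ht.2
    ((Complex.re_le_norm _).trans h)

/-- The sandwiched Rényi divergence `D̃_α(ρ‖σ)`, without the term `-(α - 1)⁻¹ * log (tr ρ)` that
normalises `ρ`. -/
def sandwichedRenyiDiv (α : ℝ) (ρ σ : Matrix n n ℂ) : ℝ :=
  (α - 1)⁻¹ * Real.log
    ((mpow (mpow σ ((1 - α) / (2 * α)) * ρ * mpow σ ((1 - α) / (2 * α))) α).trace.re)

theorem monotonicity_dpi_general [Nonempty n] (hV : ∑ k, (V k)ᴴ * V k = 1) (hρ : ρ.PosDef)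
    (hσ : σ.PosDef) (hΦρ : (krausMap V ρ).PosDef) (hΦσ : (krausMap V σ).PosDef) {α : ℝ}
    (hα : 1 < α) :
    sandwichedRenyiDiv α (krausMap V ρ) (krausMap V σ) ≤ sandwichedRenyiDiv α ρ σ := by
  have : Nonempty m := nonempty_of_sum_conjTranspose_mul_self_eq_one hV
  have hα₀ : α ≠ 0 := (one_pos.trans hα).ne'
  have hexp : (1 - α) / (2 * α) = -((1 - 1 / α) / 2) := by field_simp; ring
  have hQ := posDef_mpow_mul_mul_mpow hΦσ hΦρ (-((1 - 1 / α) / 2))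
  have hpos := (Complex.lt_def.1 (posDef_mpow hQ α).trace_pos).1
  rw [sandwichedRenyiDiv, sandwichedRenyiDiv, hexp]
  refine mul_le_mul_of_nonneg_left (Real.log_le_log hpos ?_) (inv_nonneg.2 (sub_nonneg.2 hα.le))
  rw [← rescaledKrausMap_mpow_mul_mul_mpow hσ hΦσ] at hQ ⊢
  exact trace_mpow_rescaledKrausMap_le hV hσ hΦσ (posDef_mpow_mul_mul_mpow hσ hρ _) hα.le hQ

end DataProcessing

end

theorem monotonicity_dpi {n : ℕ} (ρ σ : Matrix (Fin n) (Fin n) ℂ)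
    (hρ : ρ.PosDef) (hσ : σ.PosDef) (htr : ρ.trace = 1) (α : ℝ) (hα : 1 < α)
    (m : ℕ) (V : Fin m → Matrix (Fin n) (Fin n) ℂ)
    (hV : ∑ k, (V k)ᴴ * V k = 1)
    (E : Matrix (Fin n) (Fin n) ℂ → Matrix (Fin n) (Fin n) ℂ)
    (hE : ∀ γ, E γ = ∑ k, V k * γ * (V k)ᴴ)
    (hEρ : (E ρ).PosDef) (hEσ : (E σ).PosDef) :
    (α - 1)⁻¹ * Real.log
        ((mpow (mpow (E σ) ((1 - α) / (2 * α)) * E ρ * mpow (E σ) ((1 - α) / (2 * α))) α).trace.re) ≤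
      (α - 1)⁻¹ * Real.log
        ((mpow (mpow σ ((1 - α) / (2 * α)) * ρ * mpow σ ((1 - α) / (2 * α))) α).trace.re) := by
  have : Nonempty (Fin n) := by
    by_contra hn
    rw [not_nonempty_iff] at hn
    simp [Matrix.trace] at htr
  obtain rfl : E = krausMap V := funext hE
  exact monotonicity_dpi_general hV hρ hσ hEρ hEσ hα
end
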